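/- For the CP¹ projector P(w) built from a smooth function w of two variables, the Euler–Lagrange equation [∂_L∂_R P, P] = 0 holds if and only if w satisfies ∂_L∂_R w = 2w̄ (∂_L w)(∂_R w)/(1+|w|²) (together with its complex conjugate). -/

import Mathlib

attribute [local instance] Matrix.frobeniusNormedAddCommGroup Matrix.frobeniusNormedSpace

open Matrix

open ComplexConjugate

theorem HasDerivAt.matrix_entry {m n : Type*} [Fintype m] [Fintype n] {A : ℝ → Matrix m n ℂ}
    {A' : Matrix m n ℂ} {t : ℝ} (h : HasDerivAt A A' t) (i : m) (j : n) :
    HasDerivAt (fun s => A s i j) (A' i j) t :=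
  hasDerivAt_pi.1 (hasDerivAt_pi.1 h i) j

theorem Complex.one_add_mul_conj_ne_zero (z : ℂ) : 1 + z * conj z ≠ 0 := by
  rw [Complex.mul_conj]
  exact_mod_cast (add_pos_of_pos_of_nonneg one_pos (Complex.normSq_nonneg z)).ne'

/-- The derivative of `1 / (1 + |u|²)` along a curve `u`. -/
theorem HasDerivAt.inv_one_add_mul_conj {u : ℝ → ℂ} {u' : ℂ} {t : ℝ} (hu : HasDerivAt u u' t) :
    HasDerivAt (fun s => (1 + u s * conj (u s))⁻¹)
      (-(u' * conj (u t) + u t * conj u') * (1 + u t * conj (u t))⁻¹ ^ 2) t := by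
  have h := ((hu.mul hu.star).const_add 1).fun_inv (Complex.one_add_mul_conj_ne_zero (u t))
  refine h.congr_deriv ?_
  simp [div_eq_mul_inv]

/-- The derivative along `u` of the derivative of `1 / (1 + |u|²)` in a second direction, where `v`
is the derivative of `u` in that direction. -/
theorem HasDerivAt.deriv_inv_one_add_mul_conj {u v : ℝ → ℂ} {p r : ℂ} {t : ℝ}
    (hu : HasDerivAt u p t) (hv : HasDerivAt v r t) :
    HasDerivAt
      (fun s => -(v s * conj (u s) + u s * conj (v s)) * (1 + u s * conj (u s))⁻¹ ^ 2)
      (-(r * conj (u t) + v t * conj p + p * conj (v t) + u t * conj r)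
          * (1 + u t * conj (u t))⁻¹ ^ 2
        + 2 * (v t * conj (u t) + u t * conj (v t)) * (p * conj (u t) + u t * conj p)
          * (1 + u t * conj (u t))⁻¹ ^ 3) t := by
  have h := ((hv.mul hu.star).add (hu.mul hv.star)).neg.mul (hu.inv_one_add_mul_conj.pow 2)
  refine h.congr_deriv ?_
  have := Complex.one_add_mul_conj_ne_zero (u t)
  simp
  field_simp
  ring

/-- For the CP¹ projector built from w, the Euler–Lagrange equation
[∂_L∂_R P, P] = 0 holds iff ∂_L∂_R w (1+|w|²) = 2 w̄ ∂_L w ∂_R w together with its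
complex conjugate. -/
theorem stmt_10 (w wL wR wLR : ℝ × ℝ → ℂ)
    (P PL PR PLR : ℝ × ℝ → Matrix (Fin 2) (Fin 2) ℂ)
    (hPdef : ∀ x, P x = (1 / (1 + (Complex.normSq (w x) : ℂ))) •
      !![(Complex.normSq (w x) : ℂ), -(starRingEnd ℂ (w x)); -(w x), 1])
    (hwL : ∀ x : ℝ × ℝ, HasDerivAt (fun s => w (s, x.2)) (wL x) x.1)
    (hwR : ∀ x : ℝ × ℝ, HasDerivAt (fun s => w (x.1, s)) (wR x) x.2)
    (hwLR : ∀ x : ℝ × ℝ, HasDerivAt (fun s => wR (s, x.2)) (wLR x) x.1)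
    (hwRL : ∀ x : ℝ × ℝ, HasDerivAt (fun s => wL (x.1, s)) (wLR x) x.2)
    (hPL : ∀ x : ℝ × ℝ, HasDerivAt (fun s => P (s, x.2)) (PL x) x.1)
    (hPR : ∀ x : ℝ × ℝ, HasDerivAt (fun s => P (x.1, s)) (PR x) x.2)
    (hPLR : ∀ x : ℝ × ℝ, HasDerivAt (fun s => PR (s, x.2)) (PLR x) x.1)
    (hPRL : ∀ x : ℝ × ℝ, HasDerivAt (fun s => PL (x.1, s)) (PLR x) x.2)
    (x : ℝ × ℝ) :
    PLR x * P x = P x * PLR x ↔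
      (wLR x * (1 + (Complex.normSq (w x) : ℂ)) =
          2 * starRingEnd ℂ (w x) * wL x * wR x ∧
        starRingEnd ℂ (wLR x) * (1 + (Complex.normSq (w x) : ℂ)) =
          2 * w x * starRingEnd ℂ (wL x) * starRingEnd ℂ (wR x)) := by
  have hP11 : ∀ y, P y 1 1 = (1 + w y * conj (w y))⁻¹ := fun y => by
    simp [hPdef, Complex.mul_conj]
  have hP10 : ∀ y, P y 1 0 = -(w y * (1 + w y * conj (w y))⁻¹) := fun y => by
    simp [hPdef, Complex.mul_conj, mul_comm]
  have hP01 : ∀ y, P y 0 1 = -(conj (w y) * (1 + w y * conj (w y))⁻¹) := fun y => by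
    simp [hPdef, Complex.mul_conj, mul_comm]
  have hP00 : ∀ y, P y 0 0 = 1 - (1 + w y * conj (w y))⁻¹ := fun y => by
    have := Complex.one_add_mul_conj_ne_zero (w y)
    rw [eq_sub_iff_add_eq, hPdef]
    rw [Complex.mul_conj] at *
    simp
    field_simp
    ring
  have hR11 : ∀ y, PR y 1 1 = _ := fun y =>
    ((hPR y).matrix_entry 1 1).unique (by
      simp only [hP11]; exact (hwR y).inv_one_add_mul_conj)
  have hR00 : ∀ y, PR y 0 0 = _ := fun y =>
    ((hPR y).matrix_entry 0 0).unique (by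
      simp only [hP00]; exact (hwR y).inv_one_add_mul_conj.const_sub 1)
  have hR10 : ∀ y, PR y 1 0 = _ := fun y =>
    ((hPR y).matrix_entry 1 0).unique (by
      simp only [hP10]; exact ((hwR y).mul (hwR y).inv_one_add_mul_conj).neg)
  have hR01 : ∀ y, PR y 0 1 = _ := fun y =>
    ((hPR y).matrix_entry 0 1).unique (by
      simp only [hP01]; exact ((hwR y).star.mul (hwR y).inv_one_add_mul_conj).neg)
  have hg := (hwL x).inv_one_add_mul_conj
  have hgR := (hwL x).deriv_inv_one_add_mul_conj (hwLR x)
  have h11 : PLR x 1 1 = _ := ((hPLR x).matrix_entry 1 1).unique (by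
    simp only [hR11]; exact hgR)
  have h00 : PLR x 0 0 = _ := ((hPLR x).matrix_entry 0 0).unique (by
    simp only [hR00]; exact hgR.neg)
  have h10 : PLR x 1 0 = _ := ((hPLR x).matrix_entry 1 0).unique (by
    simp only [hR10]; exact (((hwLR x).mul hg).add ((hwL x).mul hgR)).neg)
  have h01 : PLR x 0 1 = _ := ((hPLR x).matrix_entry 0 1).unique (by
    simp only [hR01]; exact (((hwLR x).star.mul hg).add ((hwL x).star.mul hgR)).neg)
  simp only [Prod.mk.eta, ← starRingEnd_apply] at h11 h00 h10 h01
  have hN := Complex.one_add_mul_conj_ne_zero (w x)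
  rw [← Complex.mul_conj]
  set E := wLR x * (1 + w x * conj (w x)) - 2 * conj (w x) * wL x * wR x with hE
  set F := conj (wLR x) * (1 + w x * conj (w x)) - 2 * w x * conj (wL x) * conj (wR x) with hF
  have hcomm : PLR x * P x - P x * PLR x = (1 + w x * conj (w x))⁻¹ ^ 3 •
      !![w x * F - conj (w x) * E, -(F + conj (w x) ^ 2 * E);
        E + w x ^ 2 * F, conj (w x) * E - w x * F] := by
    have hN' : 1 + conj (w x) * w x ≠ 0 := by rwa [mul_comm (conj (w x))]
    ext i j
    fin_cases i <;> fin_cases j <;>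
    · simp only [Fin.zero_eta, Fin.mk_one, Matrix.sub_apply, Matrix.mul_apply, Fin.sum_univ_two,
        h00, h01, h10, h11, hP00, hP01, hP10, hP11, Matrix.smul_apply, smul_eq_mul,
        Matrix.of_apply, Matrix.cons_val_zero, Matrix.cons_val_one, hE, hF]
      field_simp
      ring
  rw [← sub_eq_zero, hcomm, smul_eq_zero_iff_right (pow_ne_zero 3 (inv_ne_zero hN)),
    ← sub_eq_zero (a := wLR x * _), ← sub_eq_zero (a := conj (wLR x) * _), ← hE, ← hF]
  constructor
  · intro h
    have e00 : w x * F - conj (w x) * E = 0 := congr_fun₂ h 0 0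
    have e10 : E + w x ^ 2 * F = 0 := congr_fun₂ h 1 0
    have hE0 : (1 + w x * conj (w x)) * E = 0 := by linear_combination e10 - w x * e00
    have hE' : E = 0 := (mul_eq_zero.1 hE0).resolve_left hN
    have e01 : -(F + conj (w x) ^ 2 * E) = 0 := congr_fun₂ h 0 1
    exact ⟨hE', by linear_combination -e01 - conj (w x) ^ 2 * hE'⟩
  · rintro ⟨hE', hF'⟩
    ext i j
    fin_cases i <;> fin_cases j <;> simp [hE', hF']
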